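/- Fix u₀ ∈ (0,1). For a function F : [0,∞) → ℝ, the following are equivalent: (1) F applied entrywise maps M({1,u₀}) ∪ M({0,1}) into M(ℝ), and F(a)·F(b) ≥ F(√(ab))² for all a, b ≥ 0; (2) F applied entrywise maps M([0,1]) into itself; (3) F agrees on (0,∞) with an absolutely monotonic entire function and 0 ≤ F(0) ≤ lim_{ε→0⁺} F(ε). Moreover, if F is continuous on (0,∞), then the inequality hypothesis F(a)F(b) ≥ F(√(ab))² in (1) may be omitted. -/

import Mathlib

open MeasureTheory Filter Set
open scoped ENNReal

/-- An admissible measure: a non-negative Borel measure on `ℝ` all of whose absolute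
moments are finite. -/
def IsAdmissible (μ : Measure ℝ) : Prop := ∀ k : ℕ, Integrable (fun x => x ^ k) μ

/-- The `k`-th power moment of a measure. -/
noncomputable def moment (μ : Measure ℝ) (k : ℕ) : ℝ := ∫ x, x ^ k ∂μ

/-- `momentSet K` is the set of moment sequences of admissible measures supported in `K`. -/
def momentSet (K : Set ℝ) : Set (ℕ → ℝ) :=
  {s | ∃ μ : Measure ℝ, IsAdmissible μ ∧ μ Kᶜ = 0 ∧ ∀ k, s k = moment μ k}

/-- An absolutely monotonic entire function: a power series with non-negative
coefficients converging at every real point. -/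
def AbsolutelyMonotonicEntire (G : ℝ → ℝ) : Prop :=
  ∃ c : ℕ → ℝ, (∀ n, 0 ≤ c n) ∧ ∀ x : ℝ, HasSum (fun n => c n * x ^ n) (G x)

/-!
Loewner's determinant argument: if the Hankel forms of `(F (a + b * u ^ k))` are nonnegative for all
small `b > 0` and `F` is smooth, then testing against a polynomial vanishing at `1, …, u ^ (n - 1)`
leaves only the `n`-th derivative, which must be nonnegative. A continuous `F` is reduced to this
case by mollification. Bernstein's theorem expands the mollified functions in power series with
nonnegative coefficients, and such expansions survive pointwise limits. Continuity on `(0, ∞)`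
comes from monotonicity (tested on `{0, 1}`) and multiplicative midpoint convexity.

Conversely, products of moment sequences are moment sequences of multiplicative convolutions, so
power series with nonnegative coefficients preserve them. The value `F 0` is seen only by measures
concentrated at the origin, whose image is a combination of atoms at `0` and `1`, with nonnegative
coefficients because `0 ≤ F 0` and `F` does not drop at `0`.
-/

open scoped ContDiff Convolution Nat Polynomial Topology

section Bernstein

variable {f : ℝ → ℝ} {s t : Set ℝ} {n : ℕ} {a x x₀ : ℝ}

lemma taylorWithinEval_subset (hst : s ⊆ t) (hs : UniqueDiffOn ℝ s) (ht : UniqueDiffOn ℝ t)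
    (hf : ContDiffOn ℝ n f t) (hx₀ : x₀ ∈ s) :
    taylorWithinEval f n s x₀ x = taylorWithinEval f n t x₀ x := by
  rw [taylor_within_apply, taylor_within_apply]
  refine Finset.sum_congr rfl fun k hk => ?_
  have hkn : (k : WithTop ℕ∞) ≤ n := mod_cast Finset.mem_range_succ_iff.mp hk
  rw [iteratedDerivWithin_eq_iteratedFDerivWithin, iteratedDerivWithin_eq_iteratedFDerivWithin,
    iteratedFDerivWithin_subset hst hs ht (hf.of_le hkn) hx₀]

lemma exists_sub_taylorWithinEval_eq (hs : UniqueDiffOn ℝ s) (hf : ContDiffOn ℝ (n + 1) f s)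
    (hx : x₀ < x) (hsub : Icc x₀ x ⊆ s) :
    ∃ ξ ∈ Ioo x₀ x, f x - taylorWithinEval f n s x₀ x =
      iteratedDerivWithin (n + 1) f s ξ * (x - x₀) ^ (n + 1) / (n + 1)! := by
  obtain ⟨ξ, hξ, h⟩ := taylor_mean_remainder_lagrange_iteratedDeriv hx.ne
    (uIcc_of_le hx.le ▸ hf.mono hsub)
  rw [uIoo_of_le hx.le] at hξ
  rw [uIcc_of_le hx.le, taylorWithinEval_subset hsub (uniqueDiffOn_Icc hx) hs hf.of_succ
    (left_mem_Icc.mpr hx.le)] at h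
  have hs_nhds : s ∈ 𝓝 ξ := mem_of_superset (Icc_mem_nhds hξ.1 hξ.2) hsub
  refine ⟨ξ, hξ, ?_⟩
  rw [h, iteratedDerivWithin_eq_iteratedDeriv hs (mod_cast hf.contDiffAt hs_nhds)
    (mem_of_mem_nhds hs_nhds)]

lemma taylorWithinEval_le_of_absolutelyMonotoneOn (hf : AbsolutelyMonotoneOn f s)
    (hs : UniqueDiffOn ℝ s) (hx : x₀ ≤ x) (hsub : Icc x₀ x ⊆ s) :
    taylorWithinEval f n s x₀ x ≤ f x := by
  rcases hx.eq_or_lt with rfl | hx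
  · rw [taylorWithinEval_self]
  obtain ⟨ξ, hξ, h⟩ := exists_sub_taylorWithinEval_eq (n := n) hs
    (hf.contDiffOn.of_le (mod_cast le_top)) hx hsub
  have hderiv := hf.iteratedDerivWithin_nonneg hs (n + 1) (hsub (Ioo_subset_Icc_self hξ))
  have := sub_nonneg.mpr hx.le
  rw [← sub_nonneg, h]
  positivity

lemma iteratedDerivWithin_mul_pow_le_of_absolutelyMonotoneOn (hf : AbsolutelyMonotoneOn f s)
    (hs : UniqueDiffOn ℝ s) (hx : x₀ ≤ x) (hsub : Icc x₀ x ⊆ s) (n : ℕ) :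
    iteratedDerivWithin n f s x₀ * (x - x₀) ^ n / n ! ≤ f x := by
  refine le_trans ?_ (taylorWithinEval_le_of_absolutelyMonotoneOn (n := n) hf hs hx hsub)
  rw [taylor_within_apply]
  have hnonneg : ∀ k ∈ Finset.range (n + 1),
      0 ≤ ((k ! : ℝ)⁻¹ * (x - x₀) ^ k) • iteratedDerivWithin k f s x₀ := fun k _ => by
    have := hf.iteratedDerivWithin_nonneg hs k (hsub (left_mem_Icc.mpr hx))
    have := sub_nonneg.mpr hx
    rw [smul_eq_mul]
    positivity
  convert Finset.single_le_sum hnonneg (Finset.self_mem_range_succ n) using 1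
  rw [smul_eq_mul]
  ring

lemma monotoneOn_iteratedDerivWithin_of_absolutelyMonotoneOn (hf : AbsolutelyMonotoneOn f s)
    (hs : UniqueDiffOn ℝ s) (hconv : Convex ℝ s) (n : ℕ) :
    MonotoneOn (iteratedDerivWithin n f s) s := by
  have hdiff : DifferentiableOn ℝ (iteratedDerivWithin n f s) s :=
    hf.contDiffOn.differentiableOn_iteratedDerivWithin (mod_cast WithTop.coe_lt_top _) hs
  refine monotoneOn_of_deriv_nonneg hconv hdiff.continuousOn (hdiff.mono interior_subset)
    fun y hy => ?_
  rw [← derivWithin_of_mem_nhds (mem_interior_iff_mem_nhds.mp hy), ← iteratedDerivWithin_succ]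
  exact hf.iteratedDerivWithin_nonneg hs (n + 1) (interior_subset hy)

-- The remainder at `x` is at most a Taylor term at `x` with step `x - a`; doubling the step
-- multiplies that term by `2 ^ (n + 1)` and still keeps it below a value of `f`.
lemma sub_taylorWithinEval_Ici_le_of_absolutelyMonotoneOn (hf : AbsolutelyMonotoneOn f (Ici a))
    (hx : a < x) (n : ℕ) :
    f x - taylorWithinEval f n (Ici a) a x ≤ f (x + 2 * (x - a)) * (1 / 2) ^ (n + 1) := by
  have hstep : 0 < x - a := sub_pos.mpr hx
  have hunique : UniqueDiffOn ℝ (Ici a) := uniqueDiffOn_Ici a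
  obtain ⟨ξ, hξ, hrem⟩ := exists_sub_taylorWithinEval_eq (n := n) hunique
    (hf.contDiffOn.of_le (mod_cast le_top)) hx Icc_subset_Ici_self
  have hmono : iteratedDerivWithin (n + 1) f (Ici a) ξ ≤ iteratedDerivWithin (n + 1) f (Ici a) x :=
    monotoneOn_iteratedDerivWithin_of_absolutelyMonotoneOn hf hunique (convex_Ici a) _
      hξ.1.le hx.le hξ.2.le
  have hterm := iteratedDerivWithin_mul_pow_le_of_absolutelyMonotoneOn hf hunique
    (show x ≤ x + 2 * (x - a) by linarith) ((Icc_subset_Ici_iff (by linarith)).mpr hx.le) (n + 1)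
  calc f x - taylorWithinEval f n (Ici a) a x
      = iteratedDerivWithin (n + 1) f (Ici a) ξ * (x - a) ^ (n + 1) / (n + 1)! := hrem
    _ ≤ iteratedDerivWithin (n + 1) f (Ici a) x * (x - a) ^ (n + 1) / (n + 1)! := by gcongr
    _ = iteratedDerivWithin (n + 1) f (Ici a) x * (x + 2 * (x - a) - x) ^ (n + 1) / (n + 1)! *
          (1 / 2) ^ (n + 1) := by
        rw [add_sub_cancel_left, mul_pow, one_div, inv_pow]
        field_simp
    _ ≤ f (x + 2 * (x - a)) * (1 / 2) ^ (n + 1) := by gcongr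

theorem hasSum_taylor_of_absolutelyMonotoneOn_Ici (hf : AbsolutelyMonotoneOn f (Ici a))
    (hx : a ≤ x) :
    HasSum (fun n => iteratedDerivWithin n f (Ici a) a / n ! * (x - a) ^ n) (f x) := by
  rcases hx.eq_or_lt with rfl | hx
  · convert hasSum_ite_eq 0 (f a) using 2 with n
    rcases eq_or_ne n 0 with rfl | hn <;> simp [*]
  have hnonneg : ∀ n, 0 ≤ iteratedDerivWithin n f (Ici a) a / n ! * (x - a) ^ n := fun n => by
    have := hf.iteratedDerivWithin_nonneg (uniqueDiffOn_Ici a) n self_mem_Ici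
    have := sub_pos.mpr hx
    positivity
  have hrem : Tendsto (fun n => f x - taylorWithinEval f n (Ici a) a x) atTop (𝓝 0) := by
    refine squeeze_zero
      (fun n => sub_nonneg.mpr (taylorWithinEval_le_of_absolutelyMonotoneOn hf
        (uniqueDiffOn_Ici a) hx.le Icc_subset_Ici_self))
      (sub_taylorWithinEval_Ici_le_of_absolutelyMonotoneOn hf hx) ?_
    have hgeom := tendsto_pow_atTop_nhds_zero_of_lt_one (r := (1 / 2 : ℝ)) (by norm_num)
      (by norm_num)
    simpa using ((tendsto_add_atTop_iff_nat 1).mpr hgeom).const_mul (f (x + 2 * (x - a)))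
  rw [hasSum_iff_tendsto_nat_of_nonneg hnonneg, ← tendsto_add_atTop_iff_nat 1]
  convert hrem.const_sub (f x) using 2 with n
  · rw [sub_sub_cancel, taylor_within_apply]
    refine Finset.sum_congr rfl fun k _ => ?_
    rw [smul_eq_mul]
    ring
  · rw [sub_zero]

end Bernstein

section PowerSeries

variable {G : ℝ → ℝ}

lemma absolutelyMonotonicEntire_tsum {c : ℕ → ℝ} (hc : ∀ n, 0 ≤ c n)
    (hsum : ∀ x, 0 < x → Summable fun n => c n * x ^ n) :
    AbsolutelyMonotonicEntire fun x => ∑' n, c n * x ^ n := by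
  refine ⟨c, hc, fun x => Summable.hasSum ?_⟩
  refine (hsum (|x| + 1) (by positivity)).of_norm_bounded fun n => ?_
  have := hc n
  rw [norm_mul, norm_pow, Real.norm_of_nonneg this, Real.norm_eq_abs]
  gcongr
  exact (lt_add_one |x|).le

namespace AbsolutelyMonotonicEntire

lemma monotoneOn_Ici (hG : AbsolutelyMonotonicEntire G) : MonotoneOn G (Ici 0) := by
  obtain ⟨c, hc, hsum⟩ := hG
  intro x (hx : 0 ≤ x) y _ hxy
  refine hasSum_le (fun n => ?_) (hsum x) (hsum y)
  have := hc n
  gcongr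

lemma continuous (hG : AbsolutelyMonotonicEntire G) : Continuous G := by
  obtain ⟨c, hc, hsum⟩ := hG
  have htsum : G = fun x => ∑' n, c n * x ^ n := funext fun x => (hsum x).tsum_eq.symm
  have hball (r : ℝ) : ContinuousOn G (Metric.ball 0 r) := by
    rw [htsum]
    refine continuousOn_tsum (fun n => by fun_prop) (hsum r).summable fun n x hx => ?_
    rw [norm_mul, norm_pow, Real.norm_of_nonneg (hc n)]
    have := hc n
    gcongr
    exact (mem_ball_zero_iff.mp hx).le
  exact continuous_iff_continuousAt.mpr fun x =>
    (hball (‖x‖ + 1)).continuousAt (Metric.isOpen_ball.mem_nhds (by simp))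

lemma tendsto_nhdsGT_zero (hG : AbsolutelyMonotonicEntire G) {F : ℝ → ℝ}
    (hFG : EqOn F G (Ioi 0)) : Tendsto F (𝓝[>] 0) (𝓝 (G 0)) :=
  hG.continuous.continuousWithinAt.tendsto.congr' (eventuallyEq_nhdsWithin_of_eqOn hFG.symm)

end AbsolutelyMonotonicEntire

theorem exists_absolutelyMonotonicEntire_eqOn_Ici {f : ℝ → ℝ}
    (hf : AbsolutelyMonotoneOn f (Ici 0)) :
    ∃ G, AbsolutelyMonotonicEntire G ∧ EqOn f G (Ici 0) := by
  have hsum {x : ℝ} (hx : 0 ≤ x) := hasSum_taylor_of_absolutelyMonotoneOn_Ici hf hx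
  simp only [sub_zero] at hsum
  exact ⟨_, absolutelyMonotonicEntire_tsum
    (fun n => div_nonneg (hf.iteratedDerivWithin_nonneg (uniqueDiffOn_Ici 0) n self_mem_Ici)
      n.factorial.cast_nonneg)
    (fun x hx => (hsum hx.le).summable), fun x hx => (hsum hx).tsum_eq.symm⟩

section Limit

variable {ι : Type*}

lemma eventually_forall_mul_pow_le_of_tendsto {l : Filter ι} {c : ι → ℕ → ℝ} {f : ι → ℝ → ℝ}
    {x L : ℝ} (hc : ∀ i n, 0 ≤ c i n) (hx : 0 ≤ x)
    (hsum : ∀ i, HasSum (fun n => c i n * (2 * x) ^ n) (f i (2 * x)))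
    (hlim : Tendsto (fun i => f i (2 * x)) l (𝓝 L)) :
    ∀ᶠ i in l, ∀ n, c i n * x ^ n ≤ (L + 1) * (1 / 2) ^ n := by
  filter_upwards [hlim.eventually_le_const (lt_add_one L)] with i hi n
  have hterm : c i n * (2 * x) ^ n ≤ f i (2 * x) :=
    le_hasSum (hsum i) n fun k _ => mul_nonneg (hc i k) (by positivity)
  calc c i n * x ^ n = c i n * (2 * x) ^ n * (1 / 2) ^ n := by
        rw [mul_assoc, ← mul_pow]
        ring_nf
    _ ≤ (L + 1) * (1 / 2) ^ n := by gcongr; exact hterm.trans hi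

-- Coefficients are bounded along `l`, so they all converge along an ultrafilter finer than `l`, and
-- geometric domination lets the limit pass through the series.
theorem exists_absolutelyMonotonicEntire_eqOn_Ioi_of_tendsto {l : Filter ι} [l.NeBot]
    {f : ι → ℝ → ℝ} {F : ℝ → ℝ} (hf : ∀ i, AbsolutelyMonotonicEntire (f i))
    (hlim : ∀ x, 0 < x → Tendsto (fun i => f i x) l (𝓝 (F x))) :
    ∃ G, AbsolutelyMonotonicEntire G ∧ EqOn F G (Ioi 0) := by
  choose c hc hsum using hf
  let U : Ultrafilter ι := Ultrafilter.of l
  have hlimU (x : ℝ) (hx : 0 < x) : Tendsto (fun i => f i x) U (𝓝 (F x)) :=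
    (hlim x hx).mono_left (Ultrafilter.of_le l)
  have hbound (x : ℝ) (hx : 0 < x) :
      ∀ᶠ i in (U : Filter ι), ∀ n, c i n * x ^ n ≤ (F (2 * x) + 1) * (1 / 2) ^ n :=
    eventually_forall_mul_pow_le_of_tendsto hc hx.le (fun i => hsum i _)
      (hlimU (2 * x) (by positivity))
  have hconv (n : ℕ) : ∃ d, 0 ≤ d ∧ Tendsto (fun i => c i n) U (𝓝 d) := by
    have hmem : ∀ᶠ i in (U : Filter ι), c i n ∈ Icc 0 ((F (2 * 1) + 1) * (1 / 2) ^ n) := by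
      filter_upwards [hbound 1 one_pos] with i hi
      exact ⟨hc i n, by simpa using hi n⟩
    obtain ⟨d, hd, hle⟩ := isCompact_Icc.ultrafilter_le_nhds' (U.map fun i => c i n) hmem
    exact ⟨d, hd.1, hle⟩
  choose d hd hdlim using hconv
  have hgeom (x : ℝ) : Summable fun n : ℕ => (F (2 * x) + 1) * (1 / 2 : ℝ) ^ n :=
    (summable_geometric_of_lt_one (by norm_num) (by norm_num)).mul_left _
  have hd_summable (x : ℝ) (hx : 0 < x) : Summable fun n => d n * x ^ n :=
    (hgeom x).of_nonneg_of_le (fun n => mul_nonneg (hd n) (by positivity)) fun n =>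
      le_of_tendsto ((hdlim n).mul_const _) ((hbound x hx).mono fun i hi => hi n)
  refine ⟨_, absolutelyMonotonicEntire_tsum hd hd_summable, fun x (hx : 0 < x) => ?_⟩
  refine tendsto_nhds_unique (hlimU x hx) ?_
  simp only [← (hsum _ x).tsum_eq]
  refine tendsto_tsum_of_dominated_convergence (hgeom x) (fun n => (hdlim n).mul_const _) ?_
  filter_upwards [hbound x hx] with i hi n
  rw [Real.norm_of_nonneg (mul_nonneg (hc i n) (by positivity))]
  exact hi n

end Limit

end PowerSeries

section Hankel

/-- The Riesz functional of a real sequence: the linear functional on polynomials sending `X ^ k`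
to `s k`. It turns statements about Hankel quadratic forms into statements about polynomials. -/
noncomputable def rieszFunctional (s : ℕ → ℝ) : ℝ[X] →ₗ[ℝ] ℝ :=
  Polynomial.lsum fun k => s k • LinearMap.id

/-- Positive semidefiniteness of all Hankel matrices `(s (i + j))` of a real sequence, expressed
as nonnegativity of the Riesz functional on squares of polynomials. -/
def HankelPosSemidef (s : ℕ → ℝ) : Prop := ∀ p : ℝ[X], 0 ≤ rieszFunctional s (p ^ 2)

lemma rieszFunctional_eq_sum (s : ℕ → ℝ) (p : ℝ[X]) :
    rieszFunctional s p = ∑ k ∈ p.support, p.coeff k * s k := by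
  simp [rieszFunctional, Polynomial.lsum, Polynomial.sum, mul_comm]

lemma rieszFunctional_monomial (s : ℕ → ℝ) (k : ℕ) (c : ℝ) :
    rieszFunctional s (Polynomial.monomial k c) = c * s k := by
  simp [rieszFunctional, Polynomial.lsum, mul_comm]

lemma rieszFunctional_pow (x : ℝ) (p : ℝ[X]) : rieszFunctional (x ^ ·) p = p.eval x := by
  rw [rieszFunctional_eq_sum, Polynomial.eval_eq_sum, Polynomial.sum]

lemma rieszFunctional_const_smul (c : ℝ) (s : ℕ → ℝ) (p : ℝ[X]) :
    rieszFunctional (c • s) p = c * rieszFunctional s p := by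
  simp only [rieszFunctional_eq_sum, Finset.mul_sum, Pi.smul_apply, smul_eq_mul]
  exact Finset.sum_congr rfl fun k _ => mul_left_comm _ _ _

lemma rieszFunctional_integral {α : Type*} [MeasurableSpace α] {μ : Measure α} {s : α → ℕ → ℝ}
    (hs : ∀ k, Integrable (s · k) μ) (p : ℝ[X]) :
    rieszFunctional (fun k => ∫ t, s t k ∂μ) p = ∫ t, rieszFunctional (s t) p ∂μ := by
  simp only [rieszFunctional_eq_sum]
  rw [integral_finsetSum _ fun k _ => (hs k).const_mul _]
  simp only [integral_const_mul]

lemma hankelPosSemidef_pow (x : ℝ) : HankelPosSemidef (x ^ ·) := fun p => by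
  rw [rieszFunctional_pow, Polynomial.eval_pow]
  exact sq_nonneg _

namespace HankelPosSemidef

variable {s : ℕ → ℝ}

lemma const_smul (hs : HankelPosSemidef s) {c : ℝ} (hc : 0 ≤ c) : HankelPosSemidef (c • s) :=
  fun p => by
    rw [rieszFunctional_const_smul]
    exact mul_nonneg hc (hs p)

lemma integral {α : Type*} [MeasurableSpace α] {μ : Measure α} {s : α → ℕ → ℝ}
    (hint : ∀ k, Integrable (s · k) μ) (hs : ∀ t, HankelPosSemidef (s t)) :
    HankelPosSemidef fun k => ∫ t, s t k ∂μ := fun p => by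
  rw [rieszFunctional_integral hint]
  exact integral_nonneg fun t => hs t p

lemma quadratic_nonneg (hs : HankelPosSemidef s) (m n : ℕ) (x y : ℝ) :
    0 ≤ x ^ 2 * s (2 * m) + 2 * x * y * s (m + n) + y ^ 2 * s (2 * n) := by
  have hsq := hs (Polynomial.monomial m x + Polynomial.monomial n y)
  simp only [sq, add_mul, mul_add, Polynomial.monomial_mul_monomial, map_add,
    rieszFunctional_monomial, ← two_mul, add_comm n m] at hsq
  linarith

lemma nonneg_two_mul (hs : HankelPosSemidef s) (n : ℕ) : 0 ≤ s (2 * n) := by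
  simpa using hs.quadratic_nonneg 0 n 0 1

lemma two_mul_le_add (hs : HankelPosSemidef s) (m n : ℕ) :
    2 * s (m + n) ≤ s (2 * m) + s (2 * n) := by
  linarith [hs.quadratic_nonneg m n 1 (-1)]

lemma sq_le_mul (hs : HankelPosSemidef s) (m n : ℕ) : s (m + n) ^ 2 ≤ s (2 * m) * s (2 * n) := by
  have hdiscrim : discrim (s (2 * m)) (2 * s (m + n)) (s (2 * n)) ≤ 0 :=
    discrim_le_zero fun x => by linarith [hs.quadratic_nonneg m n x 1]
  rw [discrim] at hdiscrim
  linarith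

end HankelPosSemidef

end Hankel

section Loewner

variable {f G : ℝ → ℝ} {n : ℕ}

lemma iteratedDeriv_nonneg_of_eventually_nonneg {x₀ : ℝ} (hf : ContDiff ℝ n f)
    (hvanish : ∀ k < n, iteratedDeriv k f x₀ = 0) (hnonneg : ∀ᶠ x in 𝓝[>] x₀, 0 ≤ f x) :
    0 ≤ iteratedDeriv n f x₀ := by
  have htaylor (x : ℝ) : taylorWithinEval f n univ x₀ x =
      iteratedDeriv n f x₀ / n ! * (x - x₀) ^ n := by
    simp only [taylor_within_apply, iteratedDerivWithin_univ]
    rw [Finset.sum_range_succ, Finset.sum_eq_zero fun k hk => by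
      rw [hvanish k (Finset.mem_range.mp hk), smul_zero], zero_add, smul_eq_mul]
    ring
  have hlim : Tendsto (fun x => f x / (x - x₀) ^ n) (𝓝[>] x₀) (𝓝 (iteratedDeriv n f x₀ / n !)) := by
    have hrem := (Real.taylor_tendsto convex_univ (mem_univ x₀) hf.contDiffOn).mono_left
      (nhdsWithin_mono x₀ (subset_univ (Ioi x₀)))
    rw [← zero_add (iteratedDeriv n f x₀ / n !)]
    refine (hrem.add_const (iteratedDeriv n f x₀ / n !)).congr' ?_
    filter_upwards [self_mem_nhdsWithin] with x hx
    have : x - x₀ ≠ 0 := (sub_pos.mpr hx).ne'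
    rw [htaylor]
    field_simp
    ring
  have hquot : 0 ≤ iteratedDeriv n f x₀ / n ! := by
    refine ge_of_tendsto hlim ?_
    filter_upwards [hnonneg, self_mem_nhdsWithin] with x hfx hx
    exact div_nonneg hfx (pow_nonneg (sub_nonneg.mpr (le_of_lt hx)) n)
  rwa [le_div_iff₀ (by positivity), zero_mul] at hquot

lemma contDiff_rieszFunctional_comp (hG : ContDiff ℝ n G) (u a : ℝ) (p : ℝ[X]) :
    ContDiff ℝ n fun b => rieszFunctional (fun k => G (a + b * u ^ k)) p := by
  simp only [rieszFunctional_eq_sum]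
  fun_prop

lemma iteratedDeriv_rieszFunctional_comp_zero (hG : ContDiff ℝ n G) (u a : ℝ) (p : ℝ[X]) :
    iteratedDeriv n (fun b => rieszFunctional (fun k => G (a + b * u ^ k)) p) 0 =
      p.eval (u ^ n) * iteratedDeriv n G a := by
  have hterm (k : ℕ) :
      iteratedDeriv n (fun b => G (a + b * u ^ k)) 0 = (u ^ n) ^ k * iteratedDeriv n G a := by
    have hscale := congrFun (iteratedDeriv_comp_const_mul (f := fun z => G (a + z)) (n := n)
      (by fun_prop) (u ^ k)) 0
    simp only [mul_comm (u ^ k), iteratedDeriv_comp_const_add, zero_mul, add_zero] at hscale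
    rw [hscale, pow_right_comm]
  simp only [rieszFunctional_eq_sum]
  rw [iteratedDeriv_fun_sum fun k _ => by fun_prop]
  simp only [iteratedDeriv_const_mul_field, hterm]
  rw [Polynomial.eval_eq_sum, Polynomial.sum, Finset.sum_mul]
  exact Finset.sum_congr rfl fun k _ => (mul_assoc _ _ _).symm

-- Loewner's argument: testing against the square of `∏ m < n, (X - u ^ m)` kills the first `n`
-- Taylor coefficients in `b` and isolates the `n`-th derivative of `G`.
theorem iteratedDeriv_nonneg_of_hankelPosSemidef (hG : ContDiff ℝ n G) {u : ℝ}
    (hu : Function.Injective fun k : ℕ => u ^ k) {a : ℝ}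
    (hpos : ∀ b, 0 < b → HankelPosSemidef fun k => G (a + b * u ^ k)) :
    0 ≤ iteratedDeriv n G a := by
  let p : ℝ[X] := ∏ m ∈ Finset.range n, (Polynomial.X - Polynomial.C (u ^ m))
  have heval (x : ℝ) : (p ^ 2).eval x = (∏ m ∈ Finset.range n, (x - u ^ m)) ^ 2 := by
    simp [p, Polynomial.eval_prod]
  have hvanish : ∀ k < n,
      iteratedDeriv k (fun b => rieszFunctional (fun j => G (a + b * u ^ j)) (p ^ 2)) 0 = 0 := by
    intro k hk
    rw [iteratedDeriv_rieszFunctional_comp_zero (hG.of_le (mod_cast hk.le)), heval,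
      Finset.prod_eq_zero (Finset.mem_range.mpr hk) (sub_self _)]
    simp
  have hnonneg := iteratedDeriv_nonneg_of_eventually_nonneg
    (contDiff_rieszFunctional_comp hG u a (p ^ 2)) hvanish
    (eventually_nhdsWithin_of_forall fun b hb => hpos b hb p)
  rw [iteratedDeriv_rieszFunctional_comp_zero hG] at hnonneg
  refine nonneg_of_mul_nonneg_right hnonneg ?_
  rw [heval, sq_pos_iff, Finset.prod_ne_zero_iff]
  exact fun m hm => sub_ne_zero.mpr (hu.ne (Finset.mem_range.mp hm).ne')

end Loewner

section Mollification

/-- Mollification of `H` by the bump `η`, translated by the outer radius of `η`: the value at `x`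
averages `H` over an interval to the right of `x`, so that hypotheses on `H` over `(0, ∞)` suffice
to control the mollification on `[0, ∞)`. -/
noncomputable def rightMollification (η : ContDiffBump (0 : ℝ)) (H : ℝ → ℝ) (x : ℝ) : ℝ :=
  (η.normed volume ⋆[ContinuousLinearMap.lsmul ℝ ℝ, volume] H) (x + η.rOut)

variable {η : ContDiffBump (0 : ℝ)} {H : ℝ → ℝ}

lemma rightMollification_eq_integral (x : ℝ) :
    rightMollification η H x = ∫ t, η.normed volume t * H (x + η.rOut - t) := rfl

lemma contDiff_rightMollification (hH : LocallyIntegrable H) :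
    ContDiff ℝ ∞ (rightMollification η H) :=
  (η.hasCompactSupport_normed.contDiff_convolution_left _ η.contDiff_normed hH).comp
    (contDiff_id.add contDiff_const)

lemma integrable_bump_mul_comp_sub (hH : LocallyIntegrable H) (x : ℝ) :
    Integrable fun t => η.normed volume t * H (x - t) :=
  η.hasCompactSupport_normed.convolutionExists_left (ContinuousLinearMap.lsmul ℝ ℝ)
    η.continuous_normed hH x

lemma hankelPosSemidef_rightMollification (hH : LocallyIntegrable H) {x : ℝ} {v : ℕ → ℝ}
    (hpos : ∀ y > x, HankelPosSemidef fun k => H (y + v k)) :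
    HankelPosSemidef fun k => rightMollification η H (x + v k) := by
  simp only [rightMollification_eq_integral]
  refine HankelPosSemidef.integral (fun k => integrable_bump_mul_comp_sub hH _) fun t => ?_
  by_cases ht : t ∈ Function.support (η.normed volume)
  · rw [η.support_normed_eq, mem_ball_zero_iff] at ht
    have hshift := hpos (x + η.rOut - t) (by linarith [Real.le_norm_self t])
    simpa only [Pi.smul_def, smul_eq_mul, add_right_comm x _ η.rOut,
      add_sub_right_comm (x + η.rOut)] using hshift.const_smul (η.nonneg_normed t)
  · simpa only [Function.notMem_support.mp ht, zero_mul, zero_smul, Pi.zero_def] using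
      (hankelPosSemidef_pow 0).const_smul le_rfl

lemma tendsto_rightMollification {ι : Type*} {l : Filter ι} {η : ι → ContDiffBump (0 : ℝ)}
    (hη : Tendsto (fun i => (η i).rOut) l (𝓝 0)) (hH : LocallyIntegrable H) {x : ℝ}
    (hx : ContinuousAt H x) :
    Tendsto (fun i => rightMollification (η i) H x) l (𝓝 (H x)) :=
  ContDiffBump.convolution_tendsto_right (g := fun _ => H) hη
    (Eventually.of_forall fun _ => hH.aestronglyMeasurable) (hx.tendsto.comp tendsto_snd)
    (by simpa only [add_zero] using hη.const_add x)

theorem exists_absolutelyMonotonicEntire_of_hankelPosSemidef (hH : LocallyIntegrable H)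
    (hcont : ContinuousOn H (Ioi 0)) {u : ℝ} (hu : Function.Injective fun k : ℕ => u ^ k)
    (hpos : ∀ a b, 0 < a → 0 < b → HankelPosSemidef fun k => H (a + b * u ^ k)) :
    ∃ G, AbsolutelyMonotonicEntire G ∧ EqOn H G (Ioi 0) := by
  have hmollified (η : ContDiffBump (0 : ℝ)) :
      AbsolutelyMonotoneOn (rightMollification η H) (Ici 0) := by
    refine .of_contDiff (contDiff_rightMollification hH) fun n x (hx : 0 ≤ x) => ?_
    exact iteratedDeriv_nonneg_of_hankelPosSemidef
      ((contDiff_rightMollification hH).of_le (mod_cast le_top)) hu fun b hb =>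
        hankelPosSemidef_rightMollification hH fun y hy => hpos y b (hx.trans_lt hy) hb
  choose G hG hHG using fun η => exists_absolutelyMonotonicEntire_eqOn_Ici (hmollified η)
  let η (m : ℕ) : ContDiffBump (0 : ℝ) :=
    { rIn := 1 / (m + 1) / 2
      rOut := 1 / (m + 1)
      rIn_pos := by positivity
      rIn_lt_rOut := half_lt_self (by positivity) }
  have hη : Tendsto (fun m => (η m).rOut) atTop (𝓝 0) := tendsto_one_div_add_atTop_nhds_zero_nat
  refine exists_absolutelyMonotonicEntire_eqOn_Ioi_of_tendsto (l := atTop) (fun m => hG (η m))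
    fun x (hx : 0 < x) => ?_
  simpa only [← hHG _ hx.le] using
    tendsto_rightMollification hη hH (hcont.continuousAt (Ioi_mem_nhds hx))

end Mollification

section MomentSet

variable {K L : Set ℝ} {s t : ℕ → ℝ}

lemma momentSet_mono (hKL : K ⊆ L) : momentSet K ⊆ momentSet L := by
  rintro s ⟨μ, hμ, hK, hs⟩
  exact ⟨μ, hμ, measure_mono_null (compl_subset_compl.mpr hKL) hK, hs⟩

lemma IsAdmissible.isFiniteMeasure {μ : Measure ℝ} (hμ : IsAdmissible μ) : IsFiniteMeasure μ := by
  simpa [integrable_const_iff] using hμ 0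

lemma powers_mem_momentSet {x : ℝ} (hx : x ∈ K) : (x ^ ·) ∈ momentSet K :=
  ⟨Measure.dirac x, fun _ => integrable_dirac (by simp), by simp [hx], fun k => by simp [moment]⟩

lemma const_smul_mem_momentSet {c : ℝ} (hc : 0 ≤ c) (hs : s ∈ momentSet K) :
    c • s ∈ momentSet K := by
  obtain ⟨μ, hμ, hK, hs⟩ := hs
  refine ⟨ENNReal.ofReal c • μ, fun k => (hμ k).smul_measure ENNReal.ofReal_ne_top, by simp [hK],
    fun k => ?_⟩
  simp [moment, integral_smul_measure, hc, hs]

lemma add_mem_momentSet (hs : s ∈ momentSet K) (ht : t ∈ momentSet K) : s + t ∈ momentSet K := by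
  obtain ⟨μ, hμ, hμK, hs⟩ := hs
  obtain ⟨ν, hν, hνK, ht⟩ := ht
  refine ⟨μ + ν, fun k => (hμ k).add_measure (hν k), by simp [hμK, hνK], fun k => ?_⟩
  rw [Pi.add_apply, hs, ht, moment, moment, moment, integral_add_measure (hμ k) (hν k)]

lemma mul_pow_add_mul_pow_mem_momentSet {a b x y : ℝ} (ha : 0 ≤ a) (hb : 0 ≤ b) (hx : x ∈ K)
    (hy : y ∈ K) : (fun k => a * x ^ k + b * y ^ k) ∈ momentSet K :=
  add_mem_momentSet (const_smul_mem_momentSet ha (powers_mem_momentSet hx))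
    (const_smul_mem_momentSet hb (powers_mem_momentSet hy))

lemma momentSet_pair_union_pair_subset_Icc {u : ℝ} (hu : u ∈ Icc 0 1) :
    momentSet {1, u} ∪ momentSet {0, 1} ⊆ momentSet (Icc 0 1) :=
  union_subset (momentSet_mono (pair_subset (by simp) hu))
    (momentSet_mono (pair_subset (by simp) (by simp)))

lemma isAdmissible_of_integrable_two_mul {μ : Measure ℝ}
    (hμ : ∀ k, Integrable (fun x => x ^ (2 * k)) μ) : IsAdmissible μ := fun k => by
  refine ((hμ 0).add (hμ k)).mono' (by fun_prop) (Eventually.of_forall fun x => ?_)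
  simp only [mul_zero, pow_zero, Pi.add_apply, Real.norm_eq_abs]
  rw [mul_comm, pow_mul, ← sq_abs]
  nlinarith [sq_nonneg (|x ^ k| - 1)]

lemma mem_momentSet_of_hasSum {ι : Type*} [Countable ι] {s : ι → ℕ → ℝ}
    (hs : ∀ i, s i ∈ momentSet K) (ht : ∀ k, HasSum (fun i => s i k) (t k)) :
    t ∈ momentSet K := by
  choose μ hμ hK hs using hs
  have hsum : IsAdmissible (Measure.sum μ) := by
    refine isAdmissible_of_integrable_two_mul fun k => ?_
    refine integrable_sum_measure (fun i => hμ i (2 * k)) ((ht (2 * k)).summable.congr fun i => ?_)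
    simp only [hs, moment, Real.norm_of_nonneg ((even_two_mul k).pow_nonneg _)]
  refine ⟨Measure.sum μ, hsum, Measure.sum_apply_eq_zero.mpr hK, fun k => ?_⟩
  simp only [hs, moment] at ht
  exact (ht k).unique (hasSum_integral_measure (hsum k))

section Submonoid

variable {S : Submonoid ℝ}

lemma mul_mem_momentSet (hS : MeasurableSet (S : Set ℝ)) (hs : s ∈ momentSet S)
    (ht : t ∈ momentSet S) : s * t ∈ momentSet S := by
  obtain ⟨μ, hμ, hμS, hs⟩ := hs
  obtain ⟨ν, hν, hνS, ht⟩ := ht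
  have := hμ.isFiniteMeasure
  have := hν.isFiniteMeasure
  have hmul : Measurable fun z : ℝ × ℝ => z.1 * z.2 := by fun_prop
  refine ⟨μ ∗ₘ ν, fun k => ?_, ?_, fun k => ?_⟩
  · rw [Measure.mconv, integrable_map_measure (by fun_prop) hmul.aemeasurable]
    simpa only [Function.comp_def, mul_pow] using (hμ k).mul_prod (hν k)
  · refine (ae_map_iff hmul.aemeasurable hS).mpr ?_
    filter_upwards [Measure.quasiMeasurePreserving_fst.ae hμS,
      Measure.quasiMeasurePreserving_snd.ae hνS] with z hz₁ hz₂
    exact S.mul_mem hz₁ hz₂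
  · rw [Pi.mul_apply, hs, ht, moment, moment, moment, Measure.mconv,
      integral_map hmul.aemeasurable (by fun_prop)]
    simp only [mul_pow]
    exact (integral_prod_mul (· ^ k) (· ^ k)).symm

lemma pow_mem_momentSet (hS : MeasurableSet (S : Set ℝ)) (hs : s ∈ momentSet S) (n : ℕ) :
    s ^ n ∈ momentSet S := by
  induction n with
  | zero => simpa only [one_pow, pow_zero, Pi.one_def] using powers_mem_momentSet S.one_mem
  | succ n ih => exact pow_succ s n ▸ mul_mem_momentSet hS ih hs

lemma AbsolutelyMonotonicEntire.comp_mem_momentSet {G : ℝ → ℝ} (hG : AbsolutelyMonotonicEntire G)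
    (hS : MeasurableSet (S : Set ℝ)) (hs : s ∈ momentSet S) : G ∘ s ∈ momentSet S := by
  obtain ⟨c, hc, hsum⟩ := hG
  exact mem_momentSet_of_hasSum
    (fun n => const_smul_mem_momentSet (hc n) (pow_mem_momentSet hS hs n))
    fun k => hsum (s k)

end Submonoid

lemma hankelPosSemidef_of_mem_momentSet (hs : s ∈ momentSet K) : HankelPosSemidef s := by
  obtain ⟨μ, hμ, -, hs⟩ := hs
  exact funext hs ▸ HankelPosSemidef.integral hμ hankelPosSemidef_pow

lemma nonneg_of_mem_momentSet_Ici (hs : s ∈ momentSet (Ici 0)) (k : ℕ) : 0 ≤ s k := by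
  obtain ⟨μ, -, hK, hs⟩ := hs
  rw [hs, moment]
  refine integral_nonneg_of_ae ?_
  filter_upwards [hK] with x (hx : 0 ≤ x)
  exact pow_nonneg hx k

lemma forall_ne_zero_eq_zero_of_mem_momentSet_Ici (hs : s ∈ momentSet (Ici 0)) {k : ℕ}
    (hk : s k = 0) : ∀ j ≠ 0, s j = 0 := by
  obtain ⟨μ, hμ, hK, hs⟩ := hs
  have hpow : ∀ᵐ x ∂μ, 0 ≤ x ^ k := by
    filter_upwards [hK] with x (hx : 0 ≤ x)
    exact pow_nonneg hx k
  have hzero : ∀ᵐ x ∂μ, x = 0 := by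
    filter_upwards [(integral_eq_zero_iff_of_nonneg_ae hpow (hμ k)).mp ((hs k).symm.trans hk)]
      with x hx
    exact eq_zero_of_pow_eq_zero hx
  intro j hj
  rw [hs, moment]
  refine integral_eq_zero_of_ae ?_
  filter_upwards [hzero] with x hx
  rw [hx, zero_pow hj, Pi.zero_apply]

end MomentSet

section Continuity

-- With `L`, `R` the one-sided limits at `x`, the points `x ± h` are the midpoints of `x ∓ h` and
-- `x ± 3 * h`; letting `h → 0⁺` gives `R ^ 2 ≤ L * R` and `L ^ 2 ≤ L * R`, so `(R - L) ^ 2 ≤ 0`.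
lemma continuous_of_monotone_of_midpoint_sq_le_mul {g : ℝ → ℝ} (hg : Monotone g)
    (hmid : ∀ s t, g ((s + t) / 2) ^ 2 ≤ g s * g t) : Continuous g := by
  refine continuous_iff_continuousAt.mpr fun x => ?_
  rw [hg.continuousAt_iff_leftLim_eq_rightLim]
  have hright {c : ℝ} (hc : 0 < c) :
      Tendsto (fun h => g (x + c * h)) (𝓝[>] 0) (𝓝 (Function.rightLim g x)) := by
    refine (hg.tendsto_rightLim x).comp (tendsto_nhdsWithin_iff.mpr ⟨?_, ?_⟩)
    · exact Continuous.tendsto' (by fun_prop) _ _ (by simp) |>.mono_left nhdsWithin_le_nhds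
    · exact eventually_nhdsWithin_of_forall fun h (hh : 0 < h) => by simpa using mul_pos hc hh
  have hleft {c : ℝ} (hc : 0 < c) :
      Tendsto (fun h => g (x - c * h)) (𝓝[>] 0) (𝓝 (Function.leftLim g x)) := by
    refine (hg.tendsto_leftLim x).comp (tendsto_nhdsWithin_iff.mpr ⟨?_, ?_⟩)
    · exact Continuous.tendsto' (by fun_prop) _ _ (by simp) |>.mono_left nhdsWithin_le_nhds
    · exact eventually_nhdsWithin_of_forall fun h (hh : 0 < h) => by simpa using mul_pos hc hh
  have hRR : Function.rightLim g x ^ 2 ≤ Function.leftLim g x * Function.rightLim g x := by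
    refine le_of_tendsto_of_tendsto' ((hright one_pos).pow 2)
      ((hleft one_pos).mul (hright three_pos)) fun h => ?_
    have hmidpoint : (x - 1 * h + (x + 3 * h)) / 2 = x + 1 * h := by ring
    exact hmidpoint ▸ hmid (x - 1 * h) (x + 3 * h)
  have hLL : Function.leftLim g x ^ 2 ≤ Function.leftLim g x * Function.rightLim g x := by
    refine le_of_tendsto_of_tendsto' ((hleft one_pos).pow 2)
      ((hleft three_pos).mul (hright one_pos)) fun h => ?_
    have hmidpoint : (x - 3 * h + (x + 1 * h)) / 2 = x - 1 * h := by ring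
    exact hmidpoint ▸ hmid (x - 3 * h) (x + 1 * h)
  nlinarith

lemma continuousOn_Ioi_of_sqrt_mul_sq_le_mul {F : ℝ → ℝ} (hmono : MonotoneOn F (Ioi 0))
    (hgeom : ∀ a b, 0 < a → 0 < b → F √(a * b) ^ 2 ≤ F a * F b) : ContinuousOn F (Ioi 0) := by
  have hexp : Continuous fun t => F (Real.exp t) := by
    refine continuous_of_monotone_of_midpoint_sq_le_mul
      (fun s t hst => hmono (Real.exp_pos s) (Real.exp_pos t) (Real.exp_le_exp.mpr hst))
      fun s t => ?_
    rw [Real.exp_half, Real.exp_add]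
    exact hgeom _ _ (Real.exp_pos s) (Real.exp_pos t)
  have hlog : ContinuousOn Real.log (Ioi 0) :=
    Real.continuousOn_log.mono fun x (hx : 0 < x) => hx.ne'
  exact (hexp.comp_continuousOn hlog).congr fun x hx => by
    rw [Function.comp_apply, Real.exp_log hx]

end Continuity

section Preservers

variable {F G : ℝ → ℝ}

lemma nonneg_of_hankelPosSemidef_comp (hF : ∀ s ∈ momentSet {0, 1}, HankelPosSemidef (F ∘ s))
    {a : ℝ} (ha : 0 ≤ a) : 0 ≤ F a := by
  have hconst := hF _ (const_smul_mem_momentSet ha (powers_mem_momentSet (x := 1) (by simp)))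
  simpa using hconst.nonneg_two_mul 0

lemma monotoneOn_Ici_of_hankelPosSemidef_comp
    (hF : ∀ s ∈ momentSet {0, 1}, HankelPosSemidef (F ∘ s)) : MonotoneOn F (Ici 0) := by
  intro a (ha : 0 ≤ a) b _ hab
  have htwo := (hF _ (mul_pow_add_mul_pow_mem_momentSet (x := 1) (y := 0) ha (sub_nonneg.mpr hab)
    (by simp) (by simp))).two_mul_le_add 0 1
  simp only [Function.comp_apply, one_pow, mul_one, zero_add, pow_one, mul_zero, add_zero, pow_zero,
    add_sub_cancel, zero_pow two_ne_zero] at htwo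
  linarith

lemma sqrt_mul_sq_le_mul_of_hankelPosSemidef_comp
    (hF : ∀ s ∈ momentSet (Icc 0 1), HankelPosSemidef (F ∘ s)) {a b : ℝ} (ha : 0 ≤ a)
    (hb : 0 ≤ b) : F √(a * b) ^ 2 ≤ F a * F b := by
  wlog hba : b ≤ a generalizing a b
  · simpa only [mul_comm] using this hb ha (le_of_not_ge hba)
  obtain rfl | ha := ha.eq_or_lt
  · simp [hba.antisymm hb, sq]
  have hratio : √(b / a) ∈ Icc 0 1 :=
    ⟨Real.sqrt_nonneg _, Real.sqrt_le_one.mpr ((div_le_one ha).mpr hba)⟩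
  have hsq := (hF _ (const_smul_mem_momentSet ha.le (powers_mem_momentSet hratio))).sq_le_mul 0 1
  have hsqrt : a * √(b / a) = √(a * b) := by
    rw [← Real.sqrt_sq ha.le, ← Real.sqrt_mul (sq_nonneg a), Real.sqrt_sq ha.le]
    congr 1
    field_simp
  have hsquare : a * √(b / a) ^ 2 = b := by
    rw [Real.sq_sqrt (by positivity), mul_div_cancel₀ _ ha.ne']
  simpa [hsqrt, hsquare] using hsq

lemma exists_absolutelyMonotonicEntire_of_hankelPosSemidef_comp {u : ℝ} (hu₀ : 0 < u) (hu₁ : u ≠ 1)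
    (hF : ∀ s ∈ momentSet {1, u}, HankelPosSemidef (F ∘ s)) (hmono : MonotoneOn F (Ici 0))
    (hcont : ContinuousOn F (Ioi 0)) :
    ∃ G, AbsolutelyMonotonicEntire G ∧ EqOn F G (Ioi 0) := by
  let H (x : ℝ) : ℝ := F (max x 0)
  have hHF : EqOn H F (Ici 0) := fun x hx => congrArg F (max_eq_left hx)
  have hHF_pos : EqOn H F (Ioi 0) := hHF.mono Ioi_subset_Ici_self
  have hH : Monotone H := fun x y hxy =>
    hmono (le_max_right x 0) (le_max_right y 0) (max_le_max_right 0 hxy)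
  obtain ⟨G, hG, hHG⟩ := exists_absolutelyMonotonicEntire_of_hankelPosSemidef
    hH.locallyIntegrable (hcont.congr hHF_pos) (pow_right_injective₀ hu₀ hu₁) fun a b ha hb => by
      convert hF _ (mul_pow_add_mul_pow_mem_momentSet (x := 1) (y := u) ha.le hb.le
        (by simp) (by simp)) using 2 with k
      simpa using hHF (x := a + b * u ^ k) (mem_Ici.mpr (by positivity))
  exact ⟨G, hG, hHF_pos.symm.trans hHG⟩

theorem exists_absolutelyMonotonicEntire_tendsto_of_hankelPosSemidef_comp {u : ℝ} (hu₀ : 0 < u)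
    (hu₁ : u ≠ 1) (hF : ∀ s ∈ momentSet {1, u} ∪ momentSet {0, 1}, HankelPosSemidef (F ∘ s))
    (hcont : ContinuousOn F (Ioi 0)) :
    ∃ G, AbsolutelyMonotonicEntire G ∧ EqOn F G (Ioi 0) ∧
      0 ≤ F 0 ∧ ∃ L, Tendsto F (𝓝[>] 0) (𝓝 L) ∧ F 0 ≤ L := by
  have hmono := monotoneOn_Ici_of_hankelPosSemidef_comp fun s hs => hF s (.inr hs)
  obtain ⟨G, hG, hFG⟩ := exists_absolutelyMonotonicEntire_of_hankelPosSemidef_comp hu₀ hu₁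
    (fun s hs => hF s (.inl hs)) hmono hcont
  have hlim := hG.tendsto_nhdsGT_zero hFG
  exact ⟨G, hG, hFG, nonneg_of_hankelPosSemidef_comp (fun s hs => hF s (.inr hs)) le_rfl,
    G 0, hlim, ge_of_tendsto hlim <| eventually_nhdsWithin_of_forall fun x (hx : 0 < x) =>
      hmono self_mem_Ici hx.le hx.le⟩

theorem mapsTo_momentSet_of_absolutelyMonotonicEntire {S : Submonoid ℝ}
    (hS : MeasurableSet (S : Set ℝ)) (hS_nonneg : (S : Set ℝ) ⊆ Ici 0) (hS_zero : 0 ∈ S)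
    (hG : AbsolutelyMonotonicEntire G) (hFG : EqOn F G (Ioi 0)) (hF₀ : 0 ≤ F 0) {L : ℝ}
    (hL : Tendsto F (𝓝[>] 0) (𝓝 L)) (hle : F 0 ≤ L) :
    MapsTo (F ∘ ·) (momentSet S) (momentSet S) := by
  obtain rfl : L = G 0 := tendsto_nhds_unique hL (hG.tendsto_nhdsGT_zero hFG)
  intro s hs
  have hs_Ici : s ∈ momentSet (Ici 0) := momentSet_mono hS_nonneg hs
  have hs_nonneg := nonneg_of_mem_momentSet_Ici hs_Ici
  by_cases hzero : ∃ k, s k = 0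
  -- Here `s` comes from a mass at the origin, so only `F 0` and `F (s 0)` occur.
  · obtain ⟨k, hk⟩ := hzero
    have htail := forall_ne_zero_eq_zero_of_mem_momentSet_Ici hs_Ici hk
    have hjump : F 0 ≤ F (s 0) := by
      obtain h | h := (hs_nonneg 0).eq_or_lt
      · rw [← h]
      · exact hle.trans ((hG.monotoneOn_Ici self_mem_Ici h.le h.le).trans_eq (hFG h).symm)
    convert mul_pow_add_mul_pow_mem_momentSet hF₀ (sub_nonneg.mpr hjump) S.one_mem hS_zero using 1
    funext j
    obtain rfl | hj := eq_or_ne j 0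
    · simp
    · simp [htail j hj, hj]
  · push Not at hzero
    convert hG.comp_mem_momentSet hS hs using 1
    exact funext fun k => hFG ((hs_nonneg k).lt_of_ne' (hzero k))

end Preservers

/-- Classification of the entrywise preservers of `M([0,1])`, with a minimal test set. -/
theorem moment_transform_Icc_zero_one_general (u₀ : ℝ) (hu₀ : u₀ ∈ Set.Ioo (0 : ℝ) 1)
    (F : ℝ → ℝ) :
    (List.TFAE
      [(∀ s ∈ momentSet ({1, u₀} : Set ℝ) ∪ momentSet ({0, 1} : Set ℝ),
          (fun k => F (s k)) ∈ momentSet (Set.univ : Set ℝ)) ∧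
        (∀ a b : ℝ, 0 ≤ a → 0 ≤ b → F (Real.sqrt (a * b)) ^ 2 ≤ F a * F b),
        ∀ s ∈ momentSet (Set.Icc (0 : ℝ) 1),
          (fun k => F (s k)) ∈ momentSet (Set.Icc (0 : ℝ) 1),
        ∃ G : ℝ → ℝ, AbsolutelyMonotonicEntire G ∧ (∀ x > (0 : ℝ), F x = G x) ∧
          0 ≤ F 0 ∧ ∃ L : ℝ, Tendsto F (nhdsWithin 0 (Set.Ioi 0)) (nhds L) ∧ F 0 ≤ L]) ∧
    (ContinuousOn F (Set.Ioi 0) →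
      ((∀ s ∈ momentSet ({1, u₀} : Set ℝ) ∪ momentSet ({0, 1} : Set ℝ),
          (fun k => F (s k)) ∈ momentSet (Set.univ : Set ℝ)) ↔
        ∀ s ∈ momentSet (Set.Icc (0 : ℝ) 1),
          (fun k => F (s k)) ∈ momentSet (Set.Icc (0 : ℝ) 1))) := by
  have hpsd {A : Set (ℕ → ℝ)} {K : Set ℝ} (hF : ∀ s ∈ A, F ∘ s ∈ momentSet K) :
      ∀ s ∈ A, HankelPosSemidef (F ∘ s) := fun s hs => hankelPosSemidef_of_mem_momentSet (hF s hs)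
  have h13 (hcont : ContinuousOn F (Ioi 0)) hF :=
    exists_absolutelyMonotonicEntire_tendsto_of_hankelPosSemidef_comp hu₀.1 hu₀.2.ne hF hcont
  have h32 G (hG : AbsolutelyMonotonicEntire G) (hFG : EqOn F G (Ioi 0)) h₀ L hL (hle : F 0 ≤ L) :=
    mapsTo_momentSet_of_absolutelyMonotonicEntire (S := unitInterval.submonoid) measurableSet_Icc
      Icc_subset_Ici_self unitInterval.zero_mem hG hFG h₀ hL hle
  have h21 (hF : ∀ s ∈ momentSet (Icc 0 1), F ∘ s ∈ momentSet (Icc 0 1)) s hs :=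
    momentSet_mono (subset_univ _)
      (hF s (momentSet_pair_union_pair_subset_Icc (Ioo_subset_Icc_self hu₀) hs))
  refine ⟨?_, fun hcont => ⟨fun hF => ?_, h21⟩⟩
  · tfae_have 1 → 3 := fun ⟨hF, hgeom⟩ => by
      have hmono := monotoneOn_Ici_of_hankelPosSemidef_comp fun s hs => hpsd hF s (.inr hs)
      exact h13 (continuousOn_Ioi_of_sqrt_mul_sq_le_mul (hmono.mono Ioi_subset_Ici_self)
        fun a b ha hb => hgeom a b ha.le hb.le) (hpsd hF)
    tfae_have 3 → 2 := fun ⟨G, hG, hFG, h₀, L, hL, hle⟩ => h32 G hG hFG h₀ L hL hle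
    tfae_have 2 → 1 := fun hF =>
      ⟨h21 hF, fun _ _ => sqrt_mul_sq_le_mul_of_hankelPosSemidef_comp (hpsd hF)⟩
    tfae_finish
  · obtain ⟨G, hG, hFG, h₀, L, hL, hle⟩ := h13 hcont (hpsd hF)
    exact h32 G hG hFG h₀ L hL hle
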